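/- Let M be a positive integer, R an integer, and X, Y, D real numbers with X ≥ 0 and D ≥ 0. Then there are only finitely many 6-tuples (r₁, x₁, y₁, r₂, x₂, y₂) with r₁, r₂ ∈ ℤ and x₁, x₂, y₁, y₂ ∈ (1/M)ℤ satisfying: r₁ + r₂ = R, x₁ + x₂ = X, y₁ + y₂ = Y, x₁ ≥ 0, x₂ ≥ 0, 0 ≤ xᵢ² − 2yᵢrᵢ ≤ D for i = 1, 2, (r₁, r₂) ≠ (0, 0), and (y₁, y₂) ≠ (0, 0). -/

import Mathlib

/-- `x` lies in the lattice `(1/M)·ℤ`. -/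
def inLat (M : ℕ) (x : ℝ) : Prop := ∃ k : ℤ, x = (k : ℝ) / M

/-!
Bounding the discriminants and the `xᵢ` bounds both products `yᵢ * rᵢ`. As some `yᵢ` is nonzero, and
nonzero elements of `(1/M)ℤ` have absolute value at least `1/M`, the corresponding `rᵢ` is bounded;
the other one is then bounded because the sum `r₁ + r₂` is fixed. Exchanging the roles of the ranks
and the `yᵢ` bounds `y₁` and `y₂`, so all six entries range over bounded subsets of lattices.
-/

lemma finite_setOf_abs_intCast_le (B : ℝ) : {k : ℤ | |(k : ℝ)| ≤ B}.Finite := by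
  refine (isCompact_closedBall (0 : ℤ) B).finite_of_discrete.subset fun k hk => ?_
  simpa [Int.norm_eq_abs] using hk

lemma finite_setOf_inLat_abs_le {M : ℕ} (hM : 0 < M) (B : ℝ) :
    {x : ℝ | inLat M x ∧ |x| ≤ B}.Finite := by
  have hM' : (0 : ℝ) < M := Nat.cast_pos.mpr hM
  refine ((finite_setOf_abs_intCast_le (B * M)).image fun k : ℤ => (k : ℝ) / M).subset ?_
  rintro _ ⟨⟨k, rfl⟩, hk⟩
  refine ⟨k, ?_, rfl⟩
  rwa [abs_div, Nat.abs_cast, div_le_iff₀ hM'] at hk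

lemma inLat_one_intCast (k : ℤ) : inLat 1 k := ⟨k, by simp⟩

lemma inLat.one_le_mul_abs {M : ℕ} {x : ℝ} (hx : inLat M x) (hx0 : x ≠ 0) : 1 ≤ M * |x| := by
  obtain ⟨k, rfl⟩ := hx
  obtain ⟨hk, hM⟩ := div_ne_zero_iff.mp hx0
  rw [abs_div, Nat.abs_cast, mul_div_cancel₀ _ hM]
  exact_mod_cast Int.one_le_abs (Int.cast_ne_zero.mp hk)

lemma inLat.abs_le_of_abs_mul_le {M : ℕ} {a b C : ℝ} (hb : inLat M b) (hb0 : b ≠ 0)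
    (hab : |a * b| ≤ C) : |a| ≤ M * C :=
  calc |a| ≤ |a| * (M * |b|) := le_mul_of_one_le_right (abs_nonneg a) (hb.one_le_mul_abs hb0)
    _ = M * |a * b| := by rw [abs_mul]; ring
    _ ≤ M * C := by gcongr

lemma abs_le_add_abs_add_of_abs_mul_le {M : ℕ} {a₁ a₂ b₁ b₂ C : ℝ}
    (hb₁ : inLat M b₁) (hb₂ : inLat M b₂) (hb : ¬(b₁ = 0 ∧ b₂ = 0))
    (h₁ : |a₁ * b₁| ≤ C) (h₂ : |a₂ * b₂| ≤ C) :
    |a₁| ≤ M * C + |a₁ + a₂| ∧ |a₂| ≤ M * C + |a₁ + a₂| := by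
  have hsum := abs_nonneg (a₁ + a₂)
  rcases not_and_or.mp hb with hb₁0 | hb₂0
  · have ha₁ : |a₁| ≤ M * C := hb₁.abs_le_of_abs_mul_le hb₁0 h₁
    have ha₂ : |a₂| ≤ |a₁ + a₂| + |a₁| := add_comm a₁ a₂ ▸ norm_le_add_norm_add a₂ a₁
    constructor <;> linarith
  · have ha₂ : |a₂| ≤ M * C := hb₂.abs_le_of_abs_mul_le hb₂0 h₂
    have ha₁ : |a₁| ≤ |a₁ + a₂| + |a₂| := norm_le_add_norm_add a₁ a₂
    constructor <;> linarith

lemma abs_mul_le_of_sq_sub_mem_Icc {x y r X D : ℝ} (hx : |x| ≤ X)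
    (hdisc : x ^ 2 - 2 * y * r ∈ Set.Icc 0 D) : |y * r| ≤ max (X ^ 2) D / 2 := by
  have hxX : x ^ 2 ≤ max (X ^ 2) D :=
    (sq_le_sq' (abs_le.mp hx).1 (abs_le.mp hx).2).trans (le_max_left _ _)
  have hD : D ≤ max (X ^ 2) D := le_max_right _ _
  obtain ⟨hdisc_nonneg, hdisc_le⟩ := hdisc
  exact abs_le.mpr ⟨by linarith [sq_nonneg x], by linarith⟩

theorem stmt9 (M : ℕ) (hM : 0 < M) (R : ℤ) (X Y D : ℝ) (hX : 0 ≤ X) (hD : 0 ≤ D) :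
    Set.Finite {t : ℤ × ℝ × ℝ × ℤ × ℝ × ℝ |
      inLat M t.2.1 ∧ inLat M t.2.2.1 ∧ inLat M t.2.2.2.2.1 ∧ inLat M t.2.2.2.2.2 ∧
      t.1 + t.2.2.2.1 = R ∧
      t.2.1 + t.2.2.2.2.1 = X ∧
      t.2.2.1 + t.2.2.2.2.2 = Y ∧
      0 ≤ t.2.1 ∧ 0 ≤ t.2.2.2.2.1 ∧
      0 ≤ t.2.1 ^ 2 - 2 * t.2.2.1 * (t.1 : ℝ) ∧
      t.2.1 ^ 2 - 2 * t.2.2.1 * (t.1 : ℝ) ≤ D ∧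
      0 ≤ t.2.2.2.2.1 ^ 2 - 2 * t.2.2.2.2.2 * (t.2.2.2.1 : ℝ) ∧
      t.2.2.2.2.1 ^ 2 - 2 * t.2.2.2.2.2 * (t.2.2.2.1 : ℝ) ≤ D ∧
      ¬(t.1 = 0 ∧ t.2.2.2.1 = 0) ∧
      ¬(t.2.2.1 = 0 ∧ t.2.2.2.2.2 = 0)} := by
  set C := max (X ^ 2) D / 2
  have hr_fin := finite_setOf_abs_intCast_le (M * C + |(R : ℝ)|)
  have hx_fin := finite_setOf_inLat_abs_le hM X
  have hy_fin := finite_setOf_inLat_abs_le hM (C + |Y|)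
  refine (hr_fin.prod <| hx_fin.prod <| hy_fin.prod <|
    hr_fin.prod <| hx_fin.prod hy_fin).subset ?_
  rintro ⟨r₁, x₁, y₁, r₂, x₂, y₂⟩ ⟨hx₁, hy₁, hx₂, hy₂, rfl, rfl, rfl, hx₁_nonneg, hx₂_nonneg,
    hdisc₁_nonneg, hdisc₁_le, hdisc₂_nonneg, hdisc₂_le, hr, hy⟩
  have hx₁_le : |x₁| ≤ x₁ + x₂ := by rw [abs_of_nonneg hx₁_nonneg]; linarith
  have hx₂_le : |x₂| ≤ x₁ + x₂ := by rw [abs_of_nonneg hx₂_nonneg]; linarith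
  have hyr₁ : |y₁ * r₁| ≤ C := abs_mul_le_of_sq_sub_mem_Icc hx₁_le ⟨hdisc₁_nonneg, hdisc₁_le⟩
  have hyr₂ : |y₂ * r₂| ≤ C := abs_mul_le_of_sq_sub_mem_Icc hx₂_le ⟨hdisc₂_nonneg, hdisc₂_le⟩
  obtain ⟨hr₁_le, hr₂_le⟩ := abs_le_add_abs_add_of_abs_mul_le hy₁ hy₂ hy
    (mul_comm y₁ _ ▸ hyr₁) (mul_comm y₂ _ ▸ hyr₂)
  obtain ⟨hy₁_le, hy₂_le⟩ := abs_le_add_abs_add_of_abs_mul_le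
    (inLat_one_intCast r₁) (inLat_one_intCast r₂) (by exact_mod_cast hr) hyr₁ hyr₂
  rw [← Int.cast_add] at hr₁_le hr₂_le
  rw [Nat.cast_one, one_mul] at hy₁_le hy₂_le
  exact ⟨hr₁_le, ⟨hx₁, hx₁_le⟩, ⟨hy₁, hy₁_le⟩, hr₂_le, ⟨hx₂, hx₂_le⟩, ⟨hy₂, hy₂_le⟩⟩
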